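/- For 0 < ν < 1/2 and n ∈ Z, ∫_{−∞}^{∞} (1+x^2)^{−1/2−ν} ((1−ix)/(1+ix))^{n} dx = 2^{1−2ν}(−1)^n cos(πν) Γ(2ν) Γ(1/2+n−ν)/Γ(1/2+n+ν). -/

import Mathlib

open Complex MeasureTheory

lemma aux_int (ν : ℝ) (hν : 0 < ν) :
    Integrable (fun x : ℝ => (1 + x ^ 2) ^ (-1 / 2 - ν)) := by
  have h := integrable_rpow_neg_one_add_norm_sq (E := ℝ) (μ := volume) (r := 1 + 2 * ν)
    (by simp; linarith)
  refine h.congr (Filter.Eventually.of_forall fun x => ?_)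
  simp only [Real.norm_eq_abs, sq_abs]
  congr 1; ring

lemma aux_base (ν : ℝ) (hν : 0 < ν) :
    (∫ x : ℝ, (1 + x ^ 2) ^ (-1 / 2 - ν)) * Real.Gamma (1 / 2 + ν)
      = √Real.pi * Real.Gamma ν := by
  have hs : 0 < 1 / 2 + ν := by linarith
  have hin : ∀ x : ℝ, ∫ t in Set.Ioi (0:ℝ), t ^ ((1 / 2 + ν) - 1) * Real.exp (-((1 + x ^ 2) * t))
      = (1 + x ^ 2) ^ (-1 / 2 - ν) * Real.Gamma (1 / 2 + ν) := by
    intro x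
    have hx : 0 < 1 + x ^ 2 := by positivity
    rw [Real.integral_rpow_mul_exp_neg_mul_Ioi hs hx, one_div, Real.inv_rpow hx.le,
      ← Real.rpow_neg hx.le]
    congr 2; ring
  have hI : Integrable (Function.uncurry fun x t : ℝ =>
      t ^ ((1 / 2 + ν) - 1) * Real.exp (-((1 + x ^ 2) * t)))
      (volume.prod (volume.restrict (Set.Ioi (0:ℝ)))) := by
    rw [integrable_prod_iff]
    · constructor
      · refine Filter.Eventually.of_forall fun x => ?_
        have := integrableOn_rpow_mul_exp_neg_mul_rpow (p := 1) (s := (1 / 2 + ν) - 1)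
          (b := 1 + x ^ 2) (by linarith) one_pos (by positivity)
        simpa only [IntegrableOn, Function.uncurry, Real.rpow_one, neg_mul] using this
      · refine ((aux_int ν hν).mul_const (Real.Gamma (1 / 2 + ν))).congr
          (Filter.Eventually.of_forall fun x => ?_)
        simp only []
        rw [← hin x]
        refine setIntegral_congr_fun measurableSet_Ioi fun t ht => ?_
        have ht : 0 < t := ht
        simp only [Function.uncurry]
        rw [Real.norm_of_nonneg (by positivity)]
    · apply Measurable.aestronglyMeasurable
      unfold Function.uncurry
      fun_prop
  rw [← integral_mul_const]
  simp_rw [← hin]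
  rw [integral_integral_swap hI]
  have h2 : ∀ t ∈ Set.Ioi (0:ℝ),
      ∫ x : ℝ, t ^ ((1 / 2 + ν) - 1) * Real.exp (-((1 + x ^ 2) * t))
       = √Real.pi * (t ^ (ν - 1) * Real.exp (-(1 * t))) := by
    intro t ht
    have ht : 0 < t := ht
    have : ∀ x : ℝ, t ^ ((1 / 2 + ν) - 1) * Real.exp (-((1 + x ^ 2) * t))
        = t ^ ((1 / 2 + ν) - 1) * Real.exp (-(1 * t)) * Real.exp (-t * x ^ 2) := by
      intro x
      rw [mul_assoc, ← Real.exp_add]; ring_nf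
    simp_rw [this]
    rw [integral_const_mul, integral_gaussian, Real.sqrt_div' _ ht.le,
      show (1 / 2 + ν) - 1 = (ν - 1) + 1 / 2 by ring, Real.rpow_add ht, ← Real.sqrt_eq_rpow]
    have : √t ≠ 0 := (Real.sqrt_pos.2 ht).ne'
    field_simp
  rw [setIntegral_congr_fun measurableSet_Ioi h2, integral_const_mul,
    Real.integral_rpow_mul_exp_neg_mul_Ioi hν one_pos]
  simp

lemma aux_ne (x : ℝ) : (1 + I * (x : ℂ)) ≠ 0 := by
  intro h; have := congrArg Complex.re h; simp at this

lemma aux_ne' (x : ℝ) : (1 - I * (x : ℂ)) ≠ 0 := by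
  intro h; have := congrArg Complex.re h; simp at this

lemma aux_norm (x : ℝ) : ‖(1 - I * (x : ℂ)) / (1 + I * (x : ℂ))‖ = 1 := by
  have : (1 - I * (x : ℂ)) = (starRingEnd ℂ) (1 + I * (x : ℂ)) := by simp [sub_eq_add_neg]
  rw [norm_div, this, Complex.norm_conj, div_self]
  exact norm_ne_zero_iff.2 (aux_ne x)

/-- real-power form of the integrand -/
noncomputable def auxf (ν : ℝ) (n : ℤ) (x : ℝ) : ℂ :=
  (((1 + x ^ 2) ^ (-1 / 2 - ν) : ℝ) : ℂ) * ((1 - I * (x : ℂ)) / (1 + I * (x : ℂ))) ^ n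

lemma auxf_int (ν : ℝ) (hν : 0 < ν) (n : ℤ) : Integrable (auxf ν n) := by
  refine (aux_int ν hν).mono' ?_ (Filter.Eventually.of_forall fun x => ?_)
  · apply Continuous.aestronglyMeasurable
    unfold auxf
    refine Continuous.mul (continuous_ofReal.comp ?_) ?_
    · exact Continuous.rpow_const (by fun_prop) fun x => Or.inl (by positivity)
    · refine Continuous.zpow₀ ?_ n fun x => Or.inl (div_ne_zero (aux_ne' x) (aux_ne x))
      exact Continuous.div (by fun_prop) (by fun_prop) aux_ne
  · unfold auxf
    rw [norm_mul, norm_zpow, aux_norm, one_zpow, mul_one, norm_real,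
      Real.norm_of_nonneg (by positivity)]

lemma aux_deriv (ν : ℝ) (n : ℤ) (x : ℝ) :
    HasDerivAt (fun x : ℝ => (1 - I * (x : ℂ)) * auxf ν n x)
      (I * ((ν - 1 / 2 - n) * auxf ν n x - (ν + 1 / 2 + n) * auxf ν (n + 1) x)) x := by
  have hx : 0 < 1 + x ^ 2 := by positivity
  have h1 : HasDerivAt (fun x : ℝ => (1 - I * (x : ℂ))) (-I) x := by
    simpa using ((hasDerivAt_id x).ofReal_comp.const_mul I).const_sub 1
  have h2 : HasDerivAt (fun x : ℝ => (1 + I * (x : ℂ))) I x := by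
    simpa using ((hasDerivAt_id x).ofReal_comp.const_mul I).const_add 1
  have h3 : HasDerivAt (fun x : ℝ => (1 + x ^ 2) ^ (-1 / 2 - ν))
      ((2 * x) * (-1 / 2 - ν) * (1 + x ^ 2) ^ (-1 / 2 - ν - 1)) x := by
    have := ((hasDerivAt_pow 2 x).const_add 1).rpow_const (p := -1 / 2 - ν) (Or.inl hx.ne')
    simpa using this
  have hw := h1.div h2 (aux_ne x)
  have hz := (hasDerivAt_zpow n ((1 - I * (x : ℂ)) / (1 + I * (x : ℂ)))
    (Or.inl (div_ne_zero (aux_ne' x) (aux_ne x)))).comp x hw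
  have := h1.mul (h3.ofReal_comp.mul hz)
  refine this.congr_deriv ?_
  unfold auxf
  have hne := aux_ne x
  have hne' := aux_ne' x
  have hw0 := div_ne_zero (aux_ne' x) (aux_ne x)
  simp only [Function.comp, Pi.div_apply, Pi.mul_apply]
  rw [zpow_add_one₀ hw0, zpow_sub_one₀ hw0, Real.rpow_sub_one hx.ne']
  have hxc : (1 + (x:ℂ) ^ 2) = (1 + I * x) * (1 - I * x) := by
    linear_combination ((x:ℂ)^2) * I_sq
  push_cast
  rw [hxc]
  generalize ((1 - I * (x : ℂ)) / (1 + I * (x : ℂ))) ^ n = W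
  generalize (((1 + x ^ 2) ^ (-1 / 2 - ν) : ℝ) : ℂ) = B
  field_simp
  ring_nf
  simp only [I_sq]
  ring_nf

lemma aux_tend (ν : ℝ) (hν : 0 < ν) (n : ℤ) (l : Filter ℝ)
    (hl : Filter.Tendsto (fun x : ℝ => x ^ 2) l Filter.atTop) :
    Filter.Tendsto (fun x : ℝ => (1 - I * (x : ℂ)) * auxf ν n x) l (nhds 0) := by
  rw [tendsto_zero_iff_norm_tendsto_zero]
  have := (tendsto_rpow_neg_atTop hν).comp (Filter.tendsto_atTop_add_const_left l 1 hl)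
  refine this.congr fun x => ?_
  have hx : 0 < 1 + x ^ 2 := by positivity
  have h1 : ‖(1 - I * (x : ℂ))‖ = (1 + x ^ 2) ^ (1 / 2 : ℝ) := by
    rw [Complex.norm_eq_sqrt_sq_add_sq, ← Real.sqrt_eq_rpow]; simp
  unfold auxf
  rw [norm_mul, norm_mul, norm_zpow, aux_norm, one_zpow, mul_one, norm_real,
      Real.norm_of_nonneg (by positivity), h1, ← Real.rpow_add hx]
  simp only [Function.comp]
  congr 1; ring

lemma aux_rec (ν : ℝ) (hν : 0 < ν) (n : ℤ) :
    ((ν + 1 / 2 + n : ℝ) : ℂ) * ∫ x, auxf ν (n + 1) x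
      = ((ν - 1 / 2 - n : ℝ) : ℂ) * ∫ x, auxf ν n x := by
  have i1 := (auxf_int ν hν n).const_mul ((ν : ℂ) - 1 / 2 - n)
  have i2 := (auxf_int ν hν (n + 1)).const_mul ((ν : ℂ) + 1 / 2 + n)
  have h := integral_of_hasDerivAt_of_tendsto (aux_deriv ν n) ((i1.sub i2).const_mul I)
    (aux_tend ν hν n _ (by
      have := (Filter.tendsto_pow_atTop (α := ℝ) two_ne_zero).comp Filter.tendsto_abs_atBot_atTop
      simpa [Function.comp_def] using this))
    (aux_tend ν hν n _ (Filter.tendsto_pow_atTop two_ne_zero))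
  rw [integral_const_mul, integral_sub i1 i2, integral_const_mul, integral_const_mul] at h
  simp only [sub_zero, mul_eq_zero, I_ne_zero, false_or] at h
  push_cast
  linear_combination -h

lemma aux_nz (a : ℝ) (ha : 0 < a) (ha' : a < 1) (n : ℤ) : a + n ≠ 0 := by
  intro h
  have h1 : (-1 : ℝ) < n := by linarith
  have h2 : (n : ℝ) < 0 := by linarith
  have h1' : (-1 : ℤ) < n := by exact_mod_cast h1
  have h2' : n < 0 := by exact_mod_cast h2
  omega

/-- right-hand side -/
noncomputable def auxr (ν : ℝ) (n : ℤ) : ℝ :=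
  (2 : ℝ) ^ (1 - 2 * ν) * (-1 : ℝ) ^ n * Real.cos (Real.pi * ν) * Real.Gamma (2 * ν) *
          Real.Gamma (1 / 2 + n - ν) / Real.Gamma (1 / 2 + n + ν)

lemma auxr_rec (ν : ℝ) (hν : 0 < ν) (hν' : ν < 1 / 2) (n : ℤ) :
    (ν + 1 / 2 + n) * auxr ν (n + 1) = (ν - 1 / 2 - n) * auxr ν n := by
  have h1 : 1 / 2 + n - ν ≠ 0 := by
    have := aux_nz (1 / 2 - ν) (by linarith) (by linarith) n
    intro h; apply this; linarith
  have h2 : 1 / 2 + n + ν ≠ 0 := by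
    have := aux_nz (1 / 2 + ν) (by linarith) (by linarith) n
    intro h; apply this; linarith
  have h3 : Real.Gamma (1 / 2 + n + ν) ≠ 0 := by
    apply Real.Gamma_ne_zero
    intro m h
    apply aux_nz (1 / 2 + ν) (by linarith) (by linarith) (n + m)
    push_cast; linarith
  unfold auxr
  push_cast
  rw [show (1 / 2 + ((n : ℝ) + 1) - ν) = (1 / 2 + n - ν) + 1 by ring,
    show (1 / 2 + ((n : ℝ) + 1) + ν) = (1 / 2 + n + ν) + 1 by ring,
    Real.Gamma_add_one h1, Real.Gamma_add_one h2, zpow_add_one₀ (by norm_num)]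
  rw [show ν + 1 / 2 + n = 1 / 2 + n + ν by ring]
  generalize hA : 1 / 2 + n + ν = A at *
  rw [show ν - 1 / 2 - n = -(1 / 2 + n - ν) by ring]
  generalize hB : 1 / 2 + n - ν = B at *
  field_simp

lemma aux_zero (ν : ℝ) (hν : 0 < ν) (hν' : ν < 1 / 2) :
    ∫ x, auxf ν 0 x = (auxr ν 0 : ℂ) := by
  unfold auxf
  simp only [zpow_zero, mul_one]
  rw [integral_complex_ofReal]
  congr 1
  have hg : 0 < Real.Gamma (1 / 2 + ν) := Real.Gamma_pos_of_pos (by linarith)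
  have hb := aux_base ν hν
  have hd := Real.Gamma_mul_Gamma_add_half ν
  have hr := Real.Gamma_mul_Gamma_one_sub (1 / 2 + ν)
  have hc : 0 < Real.cos (Real.pi * ν) := by
    apply Real.cos_pos_of_mem_Ioo
    constructor <;> nlinarith [Real.pi_pos]
  rw [show Real.pi * (1 / 2 + ν) = Real.pi * ν + Real.pi / 2 by ring, Real.sin_add_pi_div_two,
    show 1 - (1 / 2 + ν) = 1 / 2 - ν by ring, eq_div_iff hc.ne'] at hr
  rw [show ν + 1 / 2 = 1 / 2 + ν by ring] at hd
  unfold auxr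
  simp only [Int.cast_zero, add_zero, zpow_zero, mul_one]
  rw [eq_div_iff hg.ne']
  rw [hb]
  apply mul_right_cancel₀ hg.ne'
  have hp : √Real.pi * √Real.pi = Real.pi := Real.mul_self_sqrt Real.pi_pos.le
  linear_combination √Real.pi * hd - (2:ℝ) ^ (1 - 2 * ν) * Real.Gamma (2 * ν) * hr
    + (2:ℝ) ^ (1 - 2 * ν) * Real.Gamma (2 * ν) * hp

lemma aux_main (ν : ℝ) (hν : 0 < ν) (hν' : ν < 1 / 2) (n : ℤ) :
    ∫ x, auxf ν n x = (auxr ν n : ℂ) := by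
  induction n using Int.induction_on with
  | zero => exact aux_zero ν hν hν'
  | succ i ih =>
    have h := aux_rec ν hν i
    have h' := auxr_rec ν hν hν' i
    rw [ih, ← ofReal_mul, ← h', ofReal_mul] at h
    refine mul_left_cancel₀ ?_ h
    rw [ofReal_ne_zero]
    have := aux_nz (1 / 2 + ν) (by linarith) (by linarith) i
    intro h; apply this; linarith
  | pred i ih =>
    have h := aux_rec ν hν (-i - 1)
    have h' := auxr_rec ν hν hν' (-i - 1)
    rw [sub_add_cancel] at h h'
    rw [ih, ← ofReal_mul, h', ofReal_mul] at h
    refine (mul_left_cancel₀ ?_ h).symm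
    rw [ofReal_ne_zero]
    have := aux_nz (1 / 2 - ν) (by linarith) (by linarith) (-i - 1)
    intro h; apply this; linarith

/-- For `0 < ν < 1/2` and `n ∈ ℤ`:
`∫_{-∞}^{∞}(1+x²)^{-1/2-ν}((1-ix)/(1+ix))ⁿ dx
  = 2^{1-2ν}(-1)ⁿ cos(πν)Γ(2ν)Γ(1/2+n-ν)/Γ(1/2+n+ν)`. -/
theorem stmt12 (ν : ℝ) (hν : 0 < ν) (hν' : ν < 1 / 2) (n : ℤ) :
    ∫ x : ℝ,
        (((1 + x ^ 2 : ℝ)) : ℂ) ^ (-(1 : ℂ) / 2 - (ν : ℂ)) *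
          ((1 - Complex.I * (x : ℂ)) / (1 + Complex.I * (x : ℂ))) ^ n =
      (((2 : ℝ) ^ (1 - 2 * ν) * (-1 : ℝ) ^ n * Real.cos (Real.pi * ν) * Real.Gamma (2 * ν) *
          Real.Gamma (1 / 2 + n - ν) / Real.Gamma (1 / 2 + n + ν) : ℝ) : ℂ) := by
  rw [← auxr, ← aux_main ν hν hν' n]
  refine integral_congr_ae (Filter.Eventually.of_forall fun x => ?_)
  have hx : 0 ≤ 1 + x ^ 2 := by positivity
  simp only [auxf]
  rw [ofReal_cpow hx]
  push_cast
  rfl
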